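/- Let p, q ∈ [0,1]^S, let P = P_p, let v ∈ ℝ^S be a unit vector (‖v‖₂ = 1), and let T ≥ 0. Then Pr_{X∼P}[ |v·(F(X,q) − q)| ≥ T + ‖p − q‖₂ ] ≤ 2·exp(−T²/2). -/

import Mathlib

open scoped BigOperators Classical

/-- The index set `S` of parental configurations: pairs `(i, a)` where
`a : Parents i → Bool`. -/
abbrev BNIdx (d : ℕ) (Par : Fin d → Finset (Fin d)) :=
  (i : Fin d) × ({j : Fin d // j ∈ Par i} → Bool)

/-- The restriction of `x ∈ {0,1}^d` to the parents of node `i`. -/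
def cfgOf {d : ℕ} (Par : Fin d → Finset (Fin d)) (x : Fin d → Bool) (i : Fin d) :
    {j : Fin d // j ∈ Par i} → Bool :=
  fun j => x j.1

/-- The Bayesian network `P_p` with conditional probability table `p`. -/
noncomputable def bnDist {d : ℕ} (Par : Fin d → Finset (Fin d))
    (p : BNIdx d Par → ℝ) (x : Fin d → Bool) : ℝ :=
  ∏ i : Fin d, if x i then p ⟨i, cfgOf Par x i⟩ else 1 - p ⟨i, cfgOf Par x i⟩

/-- `Pr_R[Π_k]`, the probability of the parental configuration `k` under `R`. -/
noncomputable def prCfg {d : ℕ} (Par : Fin d → Finset (Fin d))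
    (R : (Fin d → Bool) → ℝ) (k : BNIdx d Par) : ℝ :=
  ∑ x : Fin d → Bool, if cfgOf Par x k.1 = k.2 then R x else 0

/-- Probability of an event `A` under `R`. -/
noncomputable def prEvent {d : ℕ} (R : (Fin d → Bool) → ℝ)
    (A : (Fin d → Bool) → Prop) : ℝ :=
  ∑ x : Fin d → Bool, if A x then R x else 0

/-- Expectation `E_{X ∼ R}[g(X)]`. -/
noncomputable def expec {d : ℕ} (R : (Fin d → Bool) → ℝ)
    (g : (Fin d → Bool) → ℝ) : ℝ :=
  ∑ x : Fin d → Bool, R x * g x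

/-- The vector `F(x, q) ∈ ℝ^S`. -/
noncomputable def Fvec {d : ℕ} (Par : Fin d → Finset (Fin d))
    (x : Fin d → Bool) (q : BNIdx d Par → ℝ) (k : BNIdx d Par) : ℝ :=
  if cfgOf Par x k.1 = k.2 then (if x k.1 then 1 else 0) else q k

/-- `R` is a probability distribution on the finite set `D`. -/
def IsProbDist {D : Type*} [Fintype D] (R : D → ℝ) : Prop :=
  (∀ x, 0 ≤ R x) ∧ ∑ x, R x = 1

/-- Total variation distance. -/
noncomputable def dTV {D : Type*} [Fintype D] (A B : D → ℝ) : ℝ :=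
  (∑ x, |A x - B x|) / 2

/-- Squared Hellinger distance `d_H(A,B)² = 1 - Σ √(A(x)·B(x))`. -/
noncomputable def hellingerSq {D : Type*} [Fintype D] (A B : D → ℝ) : ℝ :=
  1 - ∑ x, Real.sqrt (A x * B x)

/-- Euclidean norm on `ℝ^ι`. -/
noncomputable def enorm2 {ι : Type*} [Fintype ι] (v : ι → ℝ) : ℝ :=
  Real.sqrt (∑ k, v k ^ 2)

/-- The second-moment matrix `M_R` (relative to `q`). -/
noncomputable def covM {d : ℕ} (Par : Fin d → Finset (Fin d))
    (R : (Fin d → Bool) → ℝ) (q : BNIdx d Par → ℝ) :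
    Matrix (BNIdx d Par) (BNIdx d Par) ℝ :=
  fun k l => expec R (fun x => (Fvec Par x q k - q k) * (Fvec Par x q l - q l))

/-- `M_R^0`: the matrix `M_R` with zeroed diagonal. -/
noncomputable def covM0 {d : ℕ} (Par : Fin d → Finset (Fin d))
    (R : (Fin d → Bool) → ℝ) (q : BNIdx d Par → ℝ) :
    Matrix (BNIdx d Par) (BNIdx d Par) ℝ :=
  fun k l => if k = l then 0 else covM Par R q k l

/-- Spectral norm (ℓ²-operator norm) of a real matrix. -/
noncomputable def specNorm {ι : Type*} [Fintype ι] [DecidableEq ι]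
    (M : Matrix ι ι ℝ) : ℝ :=
  ‖Matrix.toEuclideanCLM (𝕜 := ℝ) M‖

/-!
Reveal the coordinates of `X ∼ P_p` one at a time. Parents precede children, so the increments
`v_{i,a(i,X)} (X_i - p_{i,a(i,X)})` of `v · (F(X, p) - p)` are martingale differences, and
conditionally on the past the `i`-th one takes two values at distance `|v_{i,a(i,X)}|`. Hoeffding's
lemma bounds its conditional moment generating function, and the variance proxies add up to at most
`‖v‖² / 4` whatever the parental configurations are. Passing from `p` to `q` moves
`v · (F(X, q) - q)` by at most `‖v‖ ‖p - q‖`, by Cauchy–Schwarz. Hoeffding's lemma is used with its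
sharp constant, which gives the tail `2 exp (-2 T²)`.
-/

lemma sum_prod_le_prod_of_dependsOn {R : Type*} [CommSemiring R] [PartialOrder R]
    [IsOrderedRing R] {n : ℕ} {α : Fin n → Type*} [∀ i, Fintype (α i)] [∀ i, Nonempty (α i)]
    (g : Fin n → (∀ j, α j) → R) (c : Fin n → R) (hg : ∀ i x, 0 ≤ g i x)
    (hdep : ∀ i, DependsOn (g i) (Set.Iic i))
    (hc : ∀ i x, ∑ a, g i (Function.update x i a) ≤ c i) :
    ∑ x, ∏ i, g i x ≤ ∏ i, c i := by
  induction n with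
  | zero => simp
  | succ n ih =>
    obtain ⟨z⟩ : Nonempty (∀ j, α j) := inferInstance
    have c_nonneg (i) : 0 ≤ c i := (Finset.sum_nonneg fun a _ => hg i _).trans (hc i z)
    have first_eq (a : α 0) (x : ∀ j : Fin n, α j.succ) :
        g 0 (Fin.cons a x) = g 0 (Function.update z 0 a) :=
      hdep 0 fun j hj => by obtain rfl : j = 0 := Fin.le_zero_iff.mp hj; simp
    have rest_le (a : α 0) :
        ∑ x : ∀ j : Fin n, α j.succ, ∏ i : Fin n, g i.succ (Fin.cons a x)
          ≤ ∏ i : Fin n, c i.succ := by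
      refine ih (fun i x => g i.succ (Fin.cons a x)) (fun i => c i.succ) (fun _ _ => hg _ _)
        (fun i x y hxy => hdep i.succ fun j hj => ?_) (fun i x => ?_)
      · cases j using Fin.cases with
        | zero => simp
        | succ k => simpa using hxy k (Fin.succ_le_succ_iff.mp hj)
      · simpa only [Fin.cons_update] using hc i.succ (Fin.cons a x)
    calc ∑ x, ∏ i, g i x
        = ∑ a, g 0 (Function.update z 0 a) *
            ∑ x : ∀ j : Fin n, α j.succ, ∏ i : Fin n, g i.succ (Fin.cons a x) := by
          rw [← (Fin.consEquiv α).sum_comp, Fintype.sum_prod_type]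
          simp only [Fin.consEquiv, Equiv.coe_fn_mk, Fin.prod_univ_succ, first_eq, Finset.mul_sum]
      _ ≤ ∑ a, g 0 (Function.update z 0 a) * ∏ i : Fin n, c i.succ :=
          Finset.sum_le_sum fun a _ => mul_le_mul_of_nonneg_left (rest_le a) (hg _ _)
      _ ≤ c 0 * ∏ i : Fin n, c i.succ := by
          rw [← Finset.sum_mul]
          exact mul_le_mul_of_nonneg_right (hc 0 z) (Finset.prod_nonneg fun _ _ => c_nonneg _)
      _ = ∏ i, c i := (Fin.prod_univ_succ c).symm

lemma bernoulli_centered_mgf_le {p : ℝ} (hp : p ∈ Set.Icc (0 : ℝ) 1) (t : ℝ) :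
    p * Real.exp (t * (1 - p)) + (1 - p) * Real.exp (t * (0 - p)) ≤ Real.exp (t ^ 2 / 8) := by
  let X : Bool → ℝ := fun b => if b then 1 else 0
  have X_mem_Icc (b : Bool) : X b ∈ Set.Icc (0 : ℝ) 1 := by cases b <;> simp [X]
  have hoeffding := (ProbabilityTheory.hasSubgaussianMGF_of_mem_Icc
    (μ := ProbabilityTheory.bernoulliMeasure true false ⟨p, hp⟩)
    (measurable_of_finite X).aemeasurable (Filter.Eventually.of_forall X_mem_Icc)).mgf_le t
  have mean_eq : ∫ b, X b ∂ProbabilityTheory.bernoulliMeasure true false ⟨p, hp⟩ = p := by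
    simp [ProbabilityTheory.integral_bernoulliMeasure, X]
  simp only [ProbabilityTheory.mgf, mean_eq, ProbabilityTheory.integral_bernoulliMeasure,
    smul_eq_mul, X, if_true, Bool.false_eq_true, if_false] at hoeffding
  have variance_proxy_eq : (((‖(1 : ℝ) - 0‖₊ / 2) ^ 2 : NNReal) : ℝ) = 1 / 4 := by norm_num
  rw [variance_proxy_eq] at hoeffding
  exact hoeffding.trans_eq (by ring_nf)

section Chernoff

variable {d : ℕ} {R : (Fin d → Bool) → ℝ}

lemma prEvent_mono (hR : ∀ x, 0 ≤ R x) {A B : (Fin d → Bool) → Prop} (hAB : ∀ x, A x → B x) :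
    prEvent R A ≤ prEvent R B := by
  refine Finset.sum_le_sum fun x _ => ?_
  by_cases hA : A x
  · simp only [hA, hAB x hA, if_true, le_refl]
  · simp only [hA, if_false]
    split_ifs
    exacts [hR x, le_rfl]

lemma prEvent_le_expec (hR : ∀ x, 0 ≤ R x) {A : (Fin d → Bool) → Prop}
    {f : (Fin d → Bool) → ℝ} (hf : ∀ x, 0 ≤ f x) (hA : ∀ x, A x → 1 ≤ f x) :
    prEvent R A ≤ expec R f := by
  refine Finset.sum_le_sum fun x _ => ?_
  split_ifs with h
  · exact le_mul_of_one_le_right (hR x) (hA x h)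
  · exact mul_nonneg (hR x) (hf x)

lemma prEvent_le_abs_le_exp_mul_expec (hR : ∀ x, 0 ≤ R x) (Z : (Fin d → Bool) → ℝ) {t : ℝ}
    (ht : 0 ≤ t) (T : ℝ) :
    prEvent R (fun x => T ≤ |Z x|) ≤ Real.exp (-t * T) *
      (expec R (fun x => Real.exp (t * Z x)) + expec R (fun x => Real.exp (-t * Z x))) := by
  calc prEvent R (fun x => T ≤ |Z x|)
      ≤ expec R (fun x =>
          Real.exp (-t * T) * (Real.exp (t * Z x) + Real.exp (-t * Z x))) := by
        refine prEvent_le_expec hR (fun x => by positivity) fun x hx => ?_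
        calc 1 ≤ Real.exp (-t * T + |t * Z x|) := by
              rw [Real.one_le_exp_iff, abs_mul, abs_of_nonneg ht]
              linarith [mul_le_mul_of_nonneg_left hx ht]
          _ = Real.exp (-t * T) * Real.exp |t * Z x| := Real.exp_add _ _
          _ ≤ Real.exp (-t * T) * (Real.exp (t * Z x) + Real.exp (-t * Z x)) := by
              rw [neg_mul t (Z x)]
              gcongr
              exact Real.exp_abs_le _
    _ = _ := by
        simp only [expec, ← Finset.sum_add_distrib, Finset.mul_sum]
        exact Finset.sum_congr rfl fun x _ => by ring

end Chernoff

section Euclidean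

variable {ι : Type*} [Fintype ι]

lemma enorm2_sq (v : ι → ℝ) : enorm2 v ^ 2 = ∑ k, v k ^ 2 :=
  Real.sq_sqrt (Finset.sum_nonneg fun _ _ => sq_nonneg _)

lemma enorm2_nonneg (v : ι → ℝ) : 0 ≤ enorm2 v :=
  Real.sqrt_nonneg _

lemma enorm2_mono {v w : ι → ℝ} (h : ∀ k, |v k| ≤ |w k|) : enorm2 v ≤ enorm2 w :=
  Real.sqrt_le_sqrt (Finset.sum_le_sum fun k _ => sq_le_sq.mpr (h k))

lemma abs_sum_mul_le_enorm2_mul_enorm2 (v w : ι → ℝ) :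
    |∑ k, v k * w k| ≤ enorm2 v * enorm2 w :=
  abs_le_of_sq_le_sq
    (by simpa only [mul_pow, enorm2_sq] using Finset.sum_mul_sq_le_sq_mul_sq Finset.univ v w)
    (mul_nonneg (enorm2_nonneg v) (enorm2_nonneg w))

end Euclidean

section BayesNet

variable {d : ℕ} {Par : Fin d → Finset (Fin d)}

/-- The conditional probability of `X_i = x_i` given that the parents of `i` take their values
in `x`, under the Bayesian network `P_p`; the product of these factors over `i` is `P_p(x)`. -/
noncomputable def bnCond (p : BNIdx d Par → ℝ) (i : Fin d) (x : Fin d → Bool) : ℝ :=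
  if x i then p ⟨i, cfgOf Par x i⟩ else 1 - p ⟨i, cfgOf Par x i⟩

/-- The `i`-th increment `v_{i,a} (x_i - q_{i,a})`, with `a = a(i, x)`, of the statistic
`v · (F(x, q) - q)`; for `q = p` these are martingale differences under `P_p`. -/
noncomputable def bnIncr (v q : BNIdx d Par → ℝ) (i : Fin d) (x : Fin d → Bool) : ℝ :=
  v ⟨i, cfgOf Par x i⟩ * ((if x i then 1 else 0) - q ⟨i, cfgOf Par x i⟩)

lemma bnCond_nonneg {p : BNIdx d Par → ℝ} (hp : ∀ k, p k ∈ Set.Icc (0 : ℝ) 1) (i : Fin d)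
    (x : Fin d → Bool) : 0 ≤ bnCond p i x := by
  rw [bnCond]
  split_ifs
  exacts [(hp _).1, sub_nonneg.mpr (hp _).2]

lemma bnDist_nonneg {p : BNIdx d Par → ℝ} (hp : ∀ k, p k ∈ Set.Icc (0 : ℝ) 1)
    (x : Fin d → Bool) : 0 ≤ bnDist Par p x :=
  Finset.prod_nonneg fun i _ => bnCond_nonneg hp i x

lemma dependsOn_cfgOf (i : Fin d) : DependsOn (fun x => cfgOf Par x i) (Par i) :=
  fun _ _ h => funext fun j => h j j.2

lemma cfgOf_update {i : Fin d} (hi : i ∉ Par i) (x : Fin d → Bool) (b : Bool) :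
    cfgOf Par (Function.update x i b) i = cfgOf Par x i :=
  dependsOn_cfgOf i fun _ hj => Function.update_of_ne (ne_of_mem_of_not_mem hj hi) _ _

lemma sum_mul_Fvec_sub_eq_sum_bnIncr (v q : BNIdx d Par → ℝ) (x : Fin d → Bool) :
    ∑ k, v k * (Fvec Par x q k - q k) = ∑ i, bnIncr v q i x := by
  rw [Fintype.sum_sigma]
  refine Finset.sum_congr rfl fun i _ => ?_
  rw [Fintype.sum_eq_single (cfgOf Par x i)]
  · simp [Fvec, bnIncr]
  · intro a ha
    simp [Fvec, ha.symm]

lemma sum_bnCond_mul_exp_bnIncr_update_le {p : BNIdx d Par → ℝ}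
    (hp : ∀ k, p k ∈ Set.Icc (0 : ℝ) 1) (v : BNIdx d Par → ℝ) (t : ℝ) {i : Fin d}
    (hi : i ∉ Par i) (x : Fin d → Bool) :
    ∑ b, bnCond p i (Function.update x i b) *
        Real.exp (t * bnIncr v p i (Function.update x i b))
      ≤ Real.exp (t ^ 2 / 8 * v ⟨i, cfgOf Par x i⟩ ^ 2) := by
  have hoeffding := bernoulli_centered_mgf_le (hp ⟨i, cfgOf Par x i⟩) (t * v ⟨i, cfgOf Par x i⟩)
  simpa only [Fintype.sum_bool, bnCond, bnIncr, cfgOf_update hi, Function.update_self, if_true,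
    Bool.false_eq_true, if_false, mul_assoc, mul_pow, mul_div_right_comm] using hoeffding

lemma expec_bnDist_exp_sum_mul_Fvec_sub_le (hpar : ∀ i, ∀ j ∈ Par i, j < i)
    {p : BNIdx d Par → ℝ} (hp : ∀ k, p k ∈ Set.Icc (0 : ℝ) 1) (v : BNIdx d Par → ℝ) (t : ℝ) :
    expec (bnDist Par p) (fun x => Real.exp (t * ∑ k, v k * (Fvec Par x p k - p k)))
      ≤ Real.exp (t ^ 2 / 8 * enorm2 v ^ 2) := by
  have hdep (i : Fin d) :
      DependsOn (fun x => bnCond p i x * Real.exp (t * bnIncr v p i x)) (Set.Iic i) := by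
    intro x y hxy
    have cfg_eq : cfgOf Par x i = cfgOf Par y i :=
      dependsOn_cfgOf i fun j hj => hxy j (hpar i j hj).le
    simp only [bnCond, bnIncr, cfg_eq, hxy i Set.self_mem_Iic]
  have hcond (i : Fin d) (x : Fin d → Bool) :
      ∑ b, bnCond p i (Function.update x i b) *
          Real.exp (t * bnIncr v p i (Function.update x i b))
        ≤ Real.exp (t ^ 2 / 8 * ∑ a, v ⟨i, a⟩ ^ 2) := by
    refine (sum_bnCond_mul_exp_bnIncr_update_le hp v t (fun h => (hpar i i h).false) x).trans ?_
    gcongr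
    exact Finset.single_le_sum (f := fun a => v ⟨i, a⟩ ^ 2) (fun a _ => sq_nonneg _)
      (Finset.mem_univ (cfgOf Par x i))
  calc expec (bnDist Par p) (fun x => Real.exp (t * ∑ k, v k * (Fvec Par x p k - p k)))
      = ∑ x, ∏ i, bnCond p i x * Real.exp (t * bnIncr v p i x) := by
        refine Finset.sum_congr rfl fun x _ => ?_
        simp only [sum_mul_Fvec_sub_eq_sum_bnIncr, Finset.mul_sum, Real.exp_sum,
          Finset.prod_mul_distrib]
        rfl
    _ ≤ ∏ i, Real.exp (t ^ 2 / 8 * ∑ a, v ⟨i, a⟩ ^ 2) :=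
        sum_prod_le_prod_of_dependsOn _ _
          (fun i x => mul_nonneg (bnCond_nonneg hp i x) (Real.exp_pos _).le) hdep hcond
    _ = Real.exp (t ^ 2 / 8 * enorm2 v ^ 2) := by
        rw [← Real.exp_sum, ← Finset.mul_sum, enorm2_sq, Fintype.sum_sigma]

lemma abs_sum_mul_Fvec_sub_le (p q v : BNIdx d Par → ℝ) (x : Fin d → Bool) :
    |∑ k, v k * (Fvec Par x q k - q k)|
      ≤ |∑ k, v k * (Fvec Par x p k - p k)| + enorm2 v * enorm2 (fun k => p k - q k) := by
  have shift_le (k : BNIdx d Par) :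
      |(Fvec Par x q k - q k) - (Fvec Par x p k - p k)| ≤ |p k - q k| := by
    unfold Fvec
    by_cases h : cfgOf Par x k.1 = k.2
    · simp only [if_pos h, sub_sub_sub_cancel_left, le_refl]
    · simp only [if_neg h, sub_self, abs_zero, abs_nonneg]
  calc |∑ k, v k * (Fvec Par x q k - q k)|
      = |∑ k, v k * (Fvec Par x p k - p k) +
          ∑ k, v k * ((Fvec Par x q k - q k) - (Fvec Par x p k - p k))| := by
        rw [← Finset.sum_add_distrib]
        simp only [← mul_add, add_sub_cancel]
    _ ≤ |∑ k, v k * (Fvec Par x p k - p k)| +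
          |∑ k, v k * ((Fvec Par x q k - q k) - (Fvec Par x p k - p k))| := abs_add_le _ _
    _ ≤ _ := by
        gcongr
        exact (abs_sum_mul_le_enorm2_mul_enorm2 _ _).trans
          (mul_le_mul_of_nonneg_left (enorm2_mono shift_le) (enorm2_nonneg v))

theorem azuma_concentration_for_Fvec_general (hpar : ∀ i, ∀ j ∈ Par i, j < i)
    (p q : BNIdx d Par → ℝ) (hp : ∀ k, p k ∈ Set.Icc (0 : ℝ) 1) (v : BNIdx d Par → ℝ)
    (hv : enorm2 v ≤ 1) (T : ℝ) (hT : 0 ≤ T) :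
    prEvent (bnDist Par p)
        (fun x => T + enorm2 (fun k => p k - q k) ≤ |∑ k, v k * (Fvec Par x q k - q k)|)
      ≤ 2 * Real.exp (-2 * T ^ 2) := by
  set P := bnDist Par p
  set Z : (Fin d → Bool) → ℝ := fun x => ∑ k, v k * (Fvec Par x p k - p k)
  have mgf_le (t : ℝ) : expec P (fun x => Real.exp (t * Z x)) ≤ Real.exp (t ^ 2 / 8) :=
    (expec_bnDist_exp_sum_mul_Fvec_sub_le hpar hp v t).trans <| Real.exp_le_exp.mpr <|
      mul_le_of_le_one_right (by positivity) (pow_le_one₀ (enorm2_nonneg v) hv)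
  calc prEvent P _ ≤ prEvent P (fun x => T ≤ |Z x|) := by
        refine prEvent_mono (bnDist_nonneg hp) fun x hx => ?_
        have bias_le := mul_le_of_le_one_left (enorm2_nonneg fun k => p k - q k) hv
        linarith [abs_sum_mul_Fvec_sub_le p q v x]
    -- `t = 4 T` minimizes the Chernoff exponent `t ^ 2 / 8 - t * T`.
    _ ≤ Real.exp (-(4 * T) * T) * (expec P (fun x => Real.exp (4 * T * Z x)) +
          expec P (fun x => Real.exp (-(4 * T) * Z x))) :=
        prEvent_le_abs_le_exp_mul_expec (bnDist_nonneg hp) Z (by positivity) T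
    _ ≤ Real.exp (-(4 * T) * T) *
          (Real.exp ((4 * T) ^ 2 / 8) + Real.exp ((-(4 * T)) ^ 2 / 8)) := by
        gcongr <;> exact mgf_le _
    _ = 2 * Real.exp (-2 * T ^ 2) := by
        rw [neg_sq, ← two_mul, mul_left_comm, ← Real.exp_add]
        ring_nf

end BayesNet

theorem azuma_concentration_for_Fvec
    (d : ℕ) (hd : 1 ≤ d) (Par : Fin d → Finset (Fin d))
    (hpar : ∀ i : Fin d, ∀ j ∈ Par i, j < i)
    (p q : BNIdx d Par → ℝ)
    (hp : ∀ k, p k ∈ Set.Icc (0:ℝ) 1) (hq : ∀ k, q k ∈ Set.Icc (0:ℝ) 1)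
    (v : BNIdx d Par → ℝ) (hv : enorm2 v = 1) (T : ℝ) (hT : 0 ≤ T) :
    prEvent (bnDist Par p)
        (fun x => T + enorm2 (fun k => p k - q k) ≤
          |∑ k : BNIdx d Par, v k * (Fvec Par x q k - q k)|)
      ≤ 2 * Real.exp (-T ^ 2 / 2) := by
  refine (azuma_concentration_for_Fvec_general hpar p q hp v hv.le T hT).trans ?_
  gcongr
  linarith [sq_nonneg T]
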